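/- There exists a constant c > 0 such that for every integer k ≥ 1: (i) |x_{k,0}·x_{k+2,0}·ξ⁴ − B_k + 2·(−1)^k·x_{k+1,2}·ξ| ≤ c/X_{k+1}; (ii) there exists an integer n with |x_{k,0}·x_{k+1,0}·x_{k+3,0}·ξ⁵ + 6·x_{k+1,2}·ξ − n| ≤ c/X_{k+1}; (iii) there exists an integer n with |x_{k,0}·x_{k+1,2}·x_{k+3,2}·ξ + 2·x_{k+1,2}·ξ − n| ≤ c/X_{k+1}. -/

import Mathlib

open Polynomial Filter

noncomputable def gold : ℝ := (1 + Real.sqrt 5) / 2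

def Mmat (k : ℕ) : Matrix (Fin 2) (Fin 2) ℤ := !![3, (-1)^k; (-1)^(k+1), 0]

noncomputable def Xnorm (x : ℕ → Matrix (Fin 2) (Fin 2) ℤ) (k : ℕ) : ℝ :=
  max |(x k 0 0 : ℝ)| (max |(x k 0 1 : ℝ)| |(x k 1 1 : ℝ)|)

def MarkoffSeq (ξ : ℝ) (x : ℕ → Matrix (Fin 2) (Fin 2) ℤ) : Prop :=
  (∀ k, 1 ≤ k → x k 0 1 = x k 1 0) ∧
  (∀ k, 1 ≤ k → (x k).det = 1) ∧
  ∃ c₁ c₂ c₃ : ℝ, 0 < c₁ ∧ 0 < c₂ ∧ 0 < c₃ ∧ ∀ k, 1 ≤ k →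
    (c₁ * Xnorm x k ^ gold ≤ Xnorm x (k+1) ∧ Xnorm x (k+1) ≤ c₂ * Xnorm x k ^ gold) ∧
    (|(x k 0 0 : ℝ) * ξ - (x k 0 1 : ℝ)| ≤ c₃ / Xnorm x k ∧
     |(x k 0 1 : ℝ) * ξ - (x k 1 1 : ℝ)| ≤ c₃ / Xnorm x k) ∧
    (x (k+2) = x (k+1) * Mmat (k+1) * x k ∧ x (k+2) = x k * Mmat k * x (k+1)) ∧
    (Xnorm x k < Xnorm x (k+1) ∧ Xnorm x k < (1 + ξ^2) * |(x k 0 0 : ℝ)|)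

def polyNorm (P : Polynomial ℤ) : ℕ := P.support.sup fun i => (P.coeff i).natAbs

noncomputable def distInt (η : ℝ) : ℝ := |η - round η|

noncomputable def ratHeight (α : ℚ) : ℝ := max |(α.num : ℝ)| (α.den : ℝ)

def IsMinIntPoly (α : ℂ) (P : Polynomial ℤ) : Prop :=
  P ≠ 0 ∧ Polynomial.aeval α P = 0 ∧ P.content = 1 ∧ 0 < P.leadingCoeff ∧
  ∀ Q : Polynomial ℤ, Q ≠ 0 → Polynomial.aeval α Q = 0 → P.degree ≤ Q.degree

noncomputable def Qpoly (x : ℕ → Matrix (Fin 2) (Fin 2) ℤ) (k : ℕ) : Polynomial ℤ :=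
  Polynomial.C (x k 0 1 * x (k+1) 1 1 - x k 1 1 * x (k+1) 0 1)
  - Polynomial.C (x k 0 0 * x (k+1) 1 1 - x k 1 1 * x (k+1) 0 0) * Polynomial.X
  + Polynomial.C (x k 0 0 * x (k+1) 0 1 - x k 0 1 * x (k+1) 0 0) * Polynomial.X ^ 2

open Asymptotics

namespace MarkoffSeq

variable {ξ : ℝ} {x : ℕ → Matrix (Fin 2) (Fin 2) ℤ}

/-- Big-O along this filter means a uniform bound for all `k ≥ 1`. -/
abbrev posIndices : Filter ℕ := 𝓟 {k | 1 ≤ k}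

lemma tendsto_add_posIndices (m : ℕ) : Tendsto (fun k => k + m) posIndices posIndices := by
  rw [tendsto_principal_principal]
  intro k (hk : 1 ≤ k)
  show 1 ≤ k + m
  omega

lemma det_entries (hx : MarkoffSeq ξ x) {k : ℕ} (hk : 1 ≤ k) :
    (x k 0 0 : ℝ) * x k 1 1 - x k 0 1 ^ 2 = 1 := by
  have h := hx.2.1 k hk
  rw [Matrix.det_fin_two, ← hx.1 k hk] at h
  have h' : ((x k 0 0 * x k 1 1 - x k 0 1 * x k 0 1 : ℤ) : ℝ) = 1 := by rw [h]; simp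
  push_cast at h'
  linear_combination h'

lemma entries_add_two (hx : MarkoffSeq ξ x) {k : ℕ} (hk : 1 ≤ k) :
    (x (k+2) 0 0 : ℝ) = (3 * x k 0 0 - (-1)^k * x k 0 1) * x (k+1) 0 0
      + (-1)^k * x k 0 0 * x (k+1) 0 1 ∧
    (x (k+2) 0 1 : ℝ) = (3 * x k 0 0 - (-1)^k * x k 0 1) * x (k+1) 0 1
      + (-1)^k * x k 0 0 * x (k+1) 1 1 ∧
    (x (k+2) 0 1 : ℝ) = (3 * x k 0 1 - (-1)^k * x k 1 1) * x (k+1) 0 0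
      + (-1)^k * x k 0 1 * x (k+1) 0 1 ∧
    (x (k+2) 1 1 : ℝ) = (3 * x k 0 1 - (-1)^k * x k 1 1) * x (k+1) 0 1
      + (-1)^k * x k 0 1 * x (k+1) 1 1 := by
  have hsym := hx.1
  obtain ⟨c₁, c₂, c₃, -, -, -, h⟩ := hx.2.2
  have hrec := (h k hk).2.2.1.2
  have entry (i j : Fin 2) := congrArg (fun A : Matrix (Fin 2) (Fin 2) ℤ => (A i j : ℝ)) hrec
  have h00 := entry 0 0
  have h01 := entry 0 1
  have h10 := entry 1 0
  have h11 := entry 1 1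
  simp only [Matrix.mul_apply, Fin.sum_univ_two, Mmat, Matrix.of_apply, Matrix.cons_val',
    Matrix.cons_val_zero, Matrix.cons_val_one, Matrix.cons_val_fin_one,
    ← hsym k hk, ← hsym (k+1) (by omega), ← hsym (k+2) (by omega)] at h00 h01 h10 h11
  push_cast at h00 h01 h10 h11
  refine ⟨?_, ?_, ?_, ?_⟩
  · rw [h00]; ring
  · rw [h01]; ring
  · rw [h10]; ring
  · rw [h11]; ring

/-- The second column of `(x k)⁻¹ * x (k+2) = M_k * x (k+1)`. -/
lemma minors_add_two (hx : MarkoffSeq ξ x) {k : ℕ} (hk : 1 ≤ k) :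
    (x k 0 0 : ℝ) * x (k+2) 1 1 = x k 0 1 * x (k+2) 0 1 - (-1)^k * x (k+1) 0 1 ∧
    (x k 0 1 : ℝ) * x (k+2) 1 1
      = x k 1 1 * x (k+2) 0 1 - 3 * x (k+1) 0 1 - (-1)^k * x (k+1) 1 1 := by
  obtain ⟨-, h01, -, h11⟩ := hx.entries_add_two hk
  have hd := hx.det_entries hk
  constructor
  · rw [h11, h01]
    linear_combination (-(-1)^k * (x (k+1) 0 1 : ℝ)) * hd
  · rw [h11, h01]
    linear_combination (-(3 * x (k+1) 0 1 + (-1)^k * (x (k+1) 1 1 : ℝ))) * hd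

lemma neg_one_pow_sq (k : ℕ) : ((-1 : ℝ)^k) ^ 2 = 1 := by
  rw [← pow_mul, mul_comm, pow_mul]; simp

/-- Cayley–Hamilton for `M_k * x (k+1)`, which has determinant `1` and trace `3 * x (k+1) 0 0`. -/
lemma entries_add_three (hx : MarkoffSeq ξ x) {k : ℕ} (hk : 1 ≤ k) :
    (x (k+3) 0 0 : ℝ) = 3 * x (k+1) 0 0 * x (k+2) 0 0 - x k 0 0 ∧
    (x (k+3) 0 1 : ℝ) = 3 * x (k+1) 0 0 * x (k+2) 0 1 - x k 0 1 ∧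
    (x (k+3) 1 1 : ℝ) = 3 * x (k+1) 0 0 * x (k+2) 1 1 - x k 1 1 := by
  obtain ⟨h00, h01, h10, h11⟩ := hx.entries_add_two hk
  obtain ⟨g00, g01, -, g11⟩ := hx.entries_add_two (k := k+1) (by omega)
  have hd := hx.det_entries (k := k+1) (by omega)
  have hs := neg_one_pow_sq k
  rw [pow_succ] at g00 g01 g11
  simp only [add_assoc, Nat.reduceAdd] at g00 g01 g11
  refine ⟨?_, ?_, ?_⟩
  · linear_combination g00 - (-1)^k * ((x (k+1) 0 0 : ℝ) * h01 - x (k+1) 0 1 * h00)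
      - ((-1)^k) ^ 2 * (x k 0 0 : ℝ) * hd - (x k 0 0 : ℝ) * hs
  · linear_combination g01 - (-1)^k * ((x (k+1) 0 0 : ℝ) * h11 - x (k+1) 0 1 * h10)
      - ((-1)^k) ^ 2 * (x k 0 1 : ℝ) * hd - (x k 0 1 : ℝ) * hs
  · linear_combination g11 + 3 * (x (k+1) 0 1 * h10 - (x (k+1) 0 0 : ℝ) * h11)
      + (-1)^k * ((x (k+1) 1 1 : ℝ) * h10 - x (k+1) 0 1 * h11)
      - ((-1)^k) ^ 2 * (x k 1 1 : ℝ) * hd - (x k 1 1 : ℝ) * hs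

lemma minors_add_three (hx : MarkoffSeq ξ x) {k : ℕ} (hk : 1 ≤ k) :
    (x k 0 0 : ℝ) * x (k+3) 1 1
      = x k 0 1 * x (k+3) 0 1 - 3 * (-1)^k * x (k+1) 0 0 * x (k+1) 0 1 - 1 := by
  obtain ⟨-, h01, h11⟩ := hx.entries_add_three hk
  rw [h01, h11]
  linear_combination 3 * (x (k+1) 0 0 : ℝ) * (hx.minors_add_two hk).1 - hx.det_entries hk

lemma entry_ne_zero (hx : MarkoffSeq ξ x) {k : ℕ} (hk : 1 ≤ k) : x k 0 0 ≠ 0 := by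
  obtain ⟨c₁, c₂, c₃, -, -, -, h⟩ := hx.2.2
  have h4 := (h k hk).2.2.2.2
  have hle : |(x k 0 0 : ℝ)| ≤ Xnorm x k := le_max_left _ _
  intro h0
  simp only [h0, Int.cast_zero, abs_zero, mul_zero] at h4 hle
  linarith

lemma one_le_Xnorm (hx : MarkoffSeq ξ x) {k : ℕ} (hk : 1 ≤ k) : 1 ≤ Xnorm x k := by
  have hle : |(x k 0 0 : ℝ)| ≤ Xnorm x k := le_max_left _ _
  have : (1 : ℝ) ≤ |(x k 0 0 : ℝ)| := by exact_mod_cast Int.one_le_abs (hx.entry_ne_zero hk)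
  linarith

lemma Xnorm_mul_isBigO (hx : MarkoffSeq ξ x) :
    (fun k => Xnorm x k * Xnorm x (k+1)) =O[posIndices] fun k => Xnorm x (k+2) := by
  have hone := fun k hk => hx.one_le_Xnorm (k := k) hk
  obtain ⟨c₁, c₂, c₃, h₁, -, -, h⟩ := hx.2.2
  have hg : gold * (gold - 1) = 1 := by
    have := Real.mul_self_sqrt (show (0 : ℝ) ≤ 5 by norm_num)
    unfold gold
    linarith
  have hg1 : 0 ≤ gold - 1 := by
    have : (1 : ℝ) ≤ √5 := Real.one_le_sqrt.mpr (by norm_num)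
    unfold gold
    linarith
  rw [isBigO_principal]
  refine ⟨(c₁ * c₁ ^ (gold - 1))⁻¹, fun k (hk : 1 ≤ k) => ?_⟩
  have hX := hone k hk
  have hY := hone (k+1) (by omega)
  have hZ := hone (k+2) (by omega)
  have hYX := (h k hk).1.1
  have hZY := (h (k+1) (by omega)).1.1
  have hcpos : 0 < c₁ * c₁ ^ (gold - 1) := by positivity
  rw [Real.norm_of_nonneg (by positivity), Real.norm_of_nonneg (by positivity),
    inv_mul_eq_div, le_div_iff₀ hcpos]
  have hpow : c₁ ^ (gold - 1) * Xnorm x k ≤ Xnorm x (k+1) ^ (gold - 1) := by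
    calc c₁ ^ (gold - 1) * Xnorm x k = (c₁ * Xnorm x k ^ gold) ^ (gold - 1) := by
          rw [Real.mul_rpow h₁.le (by positivity), ← Real.rpow_mul (by positivity), hg,
            Real.rpow_one]
      _ ≤ _ := Real.rpow_le_rpow (by positivity) hYX hg1
  calc Xnorm x k * Xnorm x (k+1) * (c₁ * c₁ ^ (gold - 1))
      = c₁ * (c₁ ^ (gold - 1) * Xnorm x k * Xnorm x (k+1)) := by ring
    _ ≤ c₁ * (Xnorm x (k+1) ^ (gold - 1) * Xnorm x (k+1)) := by gcongr
    _ = c₁ * Xnorm x (k+1) ^ gold := by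
      rw [← Real.rpow_add_one (by positivity), sub_add_cancel]
    _ ≤ Xnorm x (k+2) := hZY

lemma Xnorm_mul_inv_isBigO (hx : MarkoffSeq ξ x) :
    (fun k => Xnorm x k * (Xnorm x (k+2))⁻¹) =O[posIndices] fun k => (Xnorm x (k+1))⁻¹ := by
  have h := hx.Xnorm_mul_isBigO.mul
    (isBigO_refl (fun k => (Xnorm x (k+1))⁻¹ * (Xnorm x (k+2))⁻¹) posIndices)
  refine h.congr' ?_ ?_ <;>
  · rw [eventuallyEq_principal]
    intro k (hk : 1 ≤ k)
    have hY := hx.one_le_Xnorm (k := k+1) (by omega)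
    have hZ := hx.one_le_Xnorm (k := k+2) (by omega)
    have hY0 : Xnorm x (k+1) ≠ 0 := by positivity
    have hZ0 : Xnorm x (k+2) ≠ 0 := by positivity
    field_simp

lemma Xnorm_inv_succ_isBigO (hx : MarkoffSeq ξ x) :
    (fun k => (Xnorm x (k+1))⁻¹) =O[posIndices] fun k => (Xnorm x k)⁻¹ := by
  have hone := fun k hk => hx.one_le_Xnorm (k := k) hk
  obtain ⟨c₁, c₂, c₃, -, -, -, h⟩ := hx.2.2
  rw [isBigO_principal]
  refine ⟨1, fun k (hk : 1 ≤ k) => ?_⟩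
  have hX := hone k hk
  have hlt := (h k hk).2.2.2.1
  have hX0 : 0 < Xnorm x k := by positivity
  rw [Real.norm_of_nonneg (inv_nonneg.mpr (hX0.trans hlt).le),
    Real.norm_of_nonneg (by positivity), one_mul]
  gcongr

lemma entry_isBigO (x : ℕ → Matrix (Fin 2) (Fin 2) ℤ) :
    (fun k => (x k 0 0 : ℝ)) =O[posIndices] Xnorm x ∧
    (fun k => (x k 0 1 : ℝ)) =O[posIndices] Xnorm x ∧
    (fun k => (x k 1 1 : ℝ)) =O[posIndices] Xnorm x := by
  exact ⟨.of_norm_le fun k => le_max_left _ _,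
    .of_norm_le fun k => (le_max_left _ _).trans (le_max_right _ _),
    .of_norm_le fun k => (le_max_right _ _).trans (le_max_right _ _)⟩

lemma error_isBigO (hx : MarkoffSeq ξ x) :
    (fun k => (x k 0 0 : ℝ) * ξ - x k 0 1) =O[posIndices] (fun k => (Xnorm x k)⁻¹) ∧
    (fun k => (x k 0 1 : ℝ) * ξ - x k 1 1) =O[posIndices] (fun k => (Xnorm x k)⁻¹) := by
  have hone := fun k hk => hx.one_le_Xnorm (k := k) hk
  obtain ⟨c₁, c₂, c₃, -, -, -, h⟩ := hx.2.2
  constructor <;>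
  · rw [isBigO_principal]
    refine ⟨c₃, fun k (hk : 1 ≤ k) => ?_⟩
    have hX := hone k hk
    rw [Real.norm_of_nonneg (show 0 ≤ (Xnorm x k)⁻¹ by positivity), ← div_eq_mul_inv,
      Real.norm_eq_abs]
    first | exact (h k hk).2.1.1 | exact (h k hk).2.1.2

lemma inv_entry_isBigO (hx : MarkoffSeq ξ x) :
    (fun k => (x k 0 0 : ℝ)⁻¹) =O[posIndices] fun k => (Xnorm x k)⁻¹ := by
  have hone := fun k hk => hx.one_le_Xnorm (k := k) hk
  obtain ⟨c₁, c₂, c₃, -, -, -, h⟩ := hx.2.2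
  refine IsBigO.inv_rev (isBigO_principal.mpr ⟨1 + ξ ^ 2, fun k hk => ?_⟩) ?_
  · have hX := hone k hk
    rw [Real.norm_of_nonneg (by positivity)]
    exact (h k hk).2.2.2.2.le
  · rw [eventually_principal]
    intro k hk h0
    have hX := hone k hk
    linarith

lemma neg_one_pow_isBigO : (fun k => (-1 : ℝ)^k) =O[posIndices] fun _ => (1 : ℝ) :=
  .of_norm_le fun k => by simp

/-- `x k 0 0 * (x k 0 0 * ξ - x k 0 1)` is very close to `± 1 / 3`. -/
lemma normalized_error_isBigO (hx : MarkoffSeq ξ x) :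
    (fun k => 3 * (-1)^k * (x (k+1) 0 0 : ℝ) * (x (k+1) 0 0 * ξ - x (k+1) 0 1) - 1)
      =O[posIndices] fun k => (Xnorm x (k+1))⁻¹ * (Xnorm x (k+1))⁻¹ := by
  have t := tendsto_add_posIndices
  have ha := (entry_isBigO x).1
  have he := hx.error_isBigO.1
  have hXZ := hx.Xnorm_mul_inv_isBigO
  have hZY := hx.Xnorm_inv_succ_isBigO.comp_tendsto (t 1)
  have near := ((he.comp_tendsto (t 1)).mul (ha.mul (hx.inv_entry_isBigO.comp_tendsto (t 2)))).trans
    ((isBigO_refl (fun k => (Xnorm x (k+1))⁻¹) _).mul hXZ)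
  have far := (((ha.comp_tendsto (t 1)).mul (he.comp_tendsto (t 3))).trans
    (hXZ.comp_tendsto (t 1))).mul (hx.inv_entry_isBigO.comp_tendsto (t 2)) |>.trans (hZY.mul hZY)
  refine ((neg_one_pow_isBigO.mul (near.add far)).congr' ?_ ?_)
  · rw [eventuallyEq_principal]
    intro k (hk : 1 ≤ k)
    have hz : (x (k+2) 0 0 : ℝ) ≠ 0 := by exact_mod_cast hx.entry_ne_zero (k := k+2) (by omega)
    obtain ⟨g00, -, g10, -⟩ := hx.entries_add_two (k := k+1) (by omega)
    have hw := (hx.entries_add_three hk).1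
    have hd := hx.det_entries (k := k+1) (by omega)
    have hs := neg_one_pow_sq k
    rw [pow_succ] at g00 g10
    simp only [add_assoc, Nat.reduceAdd] at g00 g10
    simp only [Function.comp_apply]
    field_simp
    linear_combination (-1)^k * (-(x (k+1) 0 0 : ℝ) * g10 + x (k+1) 0 1 * g00
      + (x (k+1) 0 0 * ξ - x (k+1) 0 1) * hw)
      - ((-1)^k) ^ 2 * (x (k+2) 0 0 : ℝ) * hd - (x (k+2) 0 0 : ℝ) * hs
  · rw [eventuallyEq_principal]
    intro k _
    simp

/-- The approximation of `x k 0 0 * x (k+2) 1 1 * ξ ^ 2`. -/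
lemma sq_approx_isBigO (hx : MarkoffSeq ξ x) :
    (fun k => (x k 0 0 : ℝ) * x (k+2) 1 1 * ξ^2 - x k 1 1 * x (k+2) 1 1 + 3 * x (k+1) 1 1
      + 2 * (-1)^k * x (k+1) 1 1 * ξ) =O[posIndices] fun k => (Xnorm x (k+1))⁻¹ := by
  have t := tendsto_add_posIndices
  obtain ⟨-, hq, hr⟩ := entry_isBigO x
  have he := hx.error_isBigO.2
  have hXZ := hx.Xnorm_mul_inv_isBigO
  have hy := he.comp_tendsto (t 1)
  have h₁ := ((hq.mul (he.comp_tendsto (t 2))).trans hXZ).const_mul_left ξ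
  have h₂ := (hr.mul (he.comp_tendsto (t 2))).trans hXZ
  have h₃ := (neg_one_pow_isBigO.mul hy).const_mul_left ξ
  simp only [one_mul] at h₃
  refine ((h₁.add h₂).sub ((hy.const_mul_left 3).add h₃)).congr' ?_ .rfl
  rw [eventuallyEq_principal]
  intro k (hk : 1 ≤ k)
  obtain ⟨m₁, m₂⟩ := hx.minors_add_two hk
  simp only [Function.comp_apply]
  linear_combination -ξ^2 * m₁ - ξ * m₂

lemma fourth_power_approx_isBigO (hx : MarkoffSeq ξ x) :
    (fun k => (x k 0 0 : ℝ) * (x (k+2) 0 0 : ℝ) * ξ^4 -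
        ((x k 1 1 : ℝ) * (x (k+2) 1 1 : ℝ) - 3 * (x (k+1) 1 1 : ℝ)) +
          2 * (-1)^k * (x (k+1) 1 1 : ℝ) * ξ) =O[posIndices] fun k => (Xnorm x (k+1))⁻¹ := by
  have t := tendsto_add_posIndices
  have hp := (entry_isBigO x).1
  obtain ⟨he, he'⟩ := hx.error_isBigO
  have hXZ := hx.Xnorm_mul_inv_isBigO
  have h₁ := ((hp.mul (he.comp_tendsto (t 2))).trans hXZ).const_mul_left (ξ^3)
  have h₂ := ((hp.mul (he'.comp_tendsto (t 2))).trans hXZ).const_mul_left (ξ^2)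
  refine ((h₁.add h₂).add hx.sq_approx_isBigO).congr_left fun k => ?_
  simp only [Function.comp_apply]
  ring

/-- The integer close to `x k 0 0 * x (k+1) 1 1 * x (k+3) 1 1 * ξ + 2 * x (k+1) 1 1 * ξ`. -/
def linearInt (x : ℕ → Matrix (Fin 2) (Fin 2) ℤ) (k : ℕ) : ℤ :=
  x k 0 1 * x (k+1) 1 1 * x (k+3) 1 1 - 3 * (-1)^k * x (k+1) 0 0 * x (k+1) 1 1 ^ 2
    + 3 * (-1)^k * x (k+1) 1 1

lemma linear_approx_isBigO (hx : MarkoffSeq ξ x) :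
    (fun k => (x k 0 0 : ℝ) * (x (k+1) 1 1 : ℝ) * (x (k+3) 1 1 : ℝ) * ξ +
          2 * (x (k+1) 1 1 : ℝ) * ξ - (linearInt x k : ℝ))
      =O[posIndices] fun k => (Xnorm x (k+1))⁻¹ := by
  have t := tendsto_add_posIndices
  obtain ⟨-, hq, hr⟩ := entry_isBigO x
  obtain ⟨he, he'⟩ := hx.error_isBigO
  have hXZ := hx.Xnorm_mul_inv_isBigO
  have hy := he.comp_tendsto (t 1)
  have hb := hr.comp_tendsto (t 1)
  have h₁ := (hq.mul ((hb.mul (he'.comp_tendsto (t 3))).trans (hXZ.comp_tendsto (t 1)))).trans hXZ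
  have cancel : (fun k => Xnorm x (k+1) * ((Xnorm x (k+1))⁻¹ * (Xnorm x (k+1))⁻¹))
      =ᶠ[posIndices] fun k => (Xnorm x (k+1))⁻¹ := by
    rw [eventuallyEq_principal]
    intro k (hk : 1 ≤ k)
    have hY := hx.one_le_Xnorm (k := k+1) (by omega)
    have hY0 : Xnorm x (k+1) ≠ 0 := by positivity
    field_simp
  have h₂ := ((hb.mul hx.normalized_error_isBigO).trans_eventuallyEq cancel).const_mul_left ξ
  have h₃ := (((neg_one_pow_isBigO.mul (hb.mul (hy.mul hy))).congr_right
    fun k => one_mul _).trans_eventuallyEq cancel).const_mul_left 3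
  refine ((h₁.sub h₂).add h₃).congr' ?_ .rfl
  rw [eventuallyEq_principal]
  intro k (hk : 1 ≤ k)
  have m := hx.minors_add_three hk
  have hd := hx.det_entries (k := k+1) (by omega)
  simp only [Function.comp_apply, linearInt]
  push_cast
  linear_combination (-ξ * (x (k+1) 1 1 : ℝ)) * m - 3 * (-1)^k * (x (k+1) 1 1 : ℝ) * hd

/-- The integer close to
`x k 0 0 * x (k+1) 0 0 * x (k+3) 0 0 * ξ ^ 5 + 6 * x (k+1) 1 1 * ξ`. -/
def quinticInt (x : ℕ → Matrix (Fin 2) (Fin 2) ℤ) (k : ℕ) : ℤ :=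
  linearInt x k - 3 * x k 0 1 * x (k+2) 1 1 - 3 * (-1)^k * x (k+1) 1 1
    + 2 * (-1)^k * x k 1 1 * x (k+2) 1 1

lemma quintic_approx_isBigO (hx : MarkoffSeq ξ x) :
    (fun k => (x k 0 0 : ℝ) * (x (k+1) 0 0 : ℝ) * (x (k+3) 0 0 : ℝ) * ξ^5 +
          6 * (x (k+1) 1 1 : ℝ) * ξ - (quinticInt x k : ℝ))
      =O[posIndices] fun k => (Xnorm x (k+1))⁻¹ := by
  have t := tendsto_add_posIndices
  obtain ⟨hp, hq, -⟩ := entry_isBigO x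
  have he := hx.error_isBigO.2
  have hXZ := hx.Xnorm_mul_inv_isBigO
  have h₁ := ((hp.mul (hx.fourth_power_approx_isBigO.comp_tendsto (t 1))).trans
    hXZ).const_mul_left ξ
  have h₂ := ((hq.mul (he.comp_tendsto (t 2))).trans hXZ).const_mul_left 3
  have h₃ := ((neg_one_pow_isBigO.mul (he.comp_tendsto (t 1))).congr_right
    fun k => one_mul _).const_mul_left 3
  have h₄ := ((neg_one_pow_isBigO.mul hx.sq_approx_isBigO).congr_right
    fun k => one_mul _).const_mul_left 2
  refine ((((h₁.add hx.linear_approx_isBigO).sub h₂).add h₃).add h₄).congr' ?_ .rfl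
  rw [eventuallyEq_principal]
  intro k (hk : 1 ≤ k)
  have m := (hx.minors_add_two hk).1
  have hs := neg_one_pow_sq k
  simp only [Function.comp_apply, quinticInt, pow_succ (-1 : ℝ) k, add_assoc, Nat.reduceAdd]
  push_cast
  linear_combination 3 * ξ * m + 4 * (x (k+1) 1 1 : ℝ) * ξ * hs

end MarkoffSeq

theorem stmt7 (ξ : ℝ) (x : ℕ → Matrix (Fin 2) (Fin 2) ℤ) (hx : MarkoffSeq ξ x) :
    ∃ c : ℝ, 0 < c ∧ ∀ k, 1 ≤ k →
      |(x k 0 0 : ℝ) * (x (k+2) 0 0 : ℝ) * ξ^4 -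
        ((x k 1 1 : ℝ) * (x (k+2) 1 1 : ℝ) - 3 * (x (k+1) 1 1 : ℝ)) +
          2 * (-1)^k * (x (k+1) 1 1 : ℝ) * ξ| ≤ c / Xnorm x (k+1) ∧
      (∃ n : ℤ, |(x k 0 0 : ℝ) * (x (k+1) 0 0 : ℝ) * (x (k+3) 0 0 : ℝ) * ξ^5 +
          6 * (x (k+1) 1 1 : ℝ) * ξ - (n : ℝ)| ≤ c / Xnorm x (k+1)) ∧
      (∃ n : ℤ, |(x k 0 0 : ℝ) * (x (k+1) 1 1 : ℝ) * (x (k+3) 1 1 : ℝ) * ξ +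
          2 * (x (k+1) 1 1 : ℝ) * ξ - (n : ℝ)| ≤ c / Xnorm x (k+1)) := by
  have bound {f : ℕ → ℝ} (hf : f =O[𝓟 {k | 1 ≤ k}] fun k => (Xnorm x (k+1))⁻¹) :
      ∃ c : ℝ, ∀ k, 1 ≤ k → |f k| ≤ c / Xnorm x (k+1) := by
    obtain ⟨c, hc⟩ := isBigO_principal.mp hf
    refine ⟨c, fun k hk => (hc k hk).trans_eq ?_⟩
    have hY := hx.one_le_Xnorm (k := k+1) (by omega)
    rw [Real.norm_of_nonneg (by positivity), div_eq_mul_inv]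
  obtain ⟨c, hc⟩ := bound hx.fourth_power_approx_isBigO
  obtain ⟨d, hd⟩ := bound hx.quintic_approx_isBigO
  obtain ⟨e, he⟩ := bound hx.linear_approx_isBigO
  refine ⟨max 1 (max c (max d e)), by positivity, fun k hk => ?_⟩
  have hY := hx.one_le_Xnorm (k := k+1) (by omega)
  refine ⟨(hc k hk).trans ?_, ⟨_, (hd k hk).trans ?_⟩, ⟨_, (he k hk).trans ?_⟩⟩ <;>
  · gcongr
    simp
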